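/- Let I ⊆ ℝ be an interval with more than one point, p ∈ ℕ, d ∈ ℕᵖ, α ∈ ℕ_p^d, and let 𝐌 = (M₁,…,M_p) be a d-averaging mapping on I such that all Mᵢ are continuous and strict. Then there exists a unique 𝐌_α-invariant mean if and only if the root graph 𝓡(G_α) is ergodic. -/

import Mathlib

/-- There is a walk of length exactly `n` from `v` to `w` in the digraph with edge relation `E`. -/
def HasWalkOfLength {V : Type*} (E : V → V → Prop) (v w : V) (n : ℕ) : Prop :=
  ∃ f : ℕ → V, f 0 = v ∧ f n = w ∧ ∀ i < n, E (f i) (f (i + 1))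

/-- `v ⇝ w` : there is a walk (of some length, possibly `0`) from `v` to `w`. -/
def Reaches {V : Type*} (E : V → V → Prop) : V → V → Prop :=
  Relation.ReflTransGen E

/-- The equivalence relation whose classes are the strongly connected components:
`v ∼ w` iff there are walks from `v` to `w` and from `w` to `v`. -/
def SCCSetoid {V : Type*} (E : V → V → Prop) : Setoid V where
  r v w := Reaches E v w ∧ Reaches E w v
  iseqv := ⟨fun _ => ⟨Relation.ReflTransGen.refl, Relation.ReflTransGen.refl⟩,
    fun h => ⟨h.2, h.1⟩,
    fun h h' => ⟨Relation.ReflTransGen.trans h.1 h'.1, Relation.ReflTransGen.trans h'.2 h.2⟩⟩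

/-- The edge relation of the quotient digraph `G^SCC` of strongly connected components :
`(P, Q)` is an edge iff `P ≠ Q` and there is an edge `(a, b) ∈ E` with `a ∈ P`, `b ∈ Q`. -/
def SCCEdge {V : Type*} (E : V → V → Prop) (P Q : Quotient (SCCSetoid E)) : Prop :=
  P ≠ Q ∧ ∃ a b : V, Quotient.mk (SCCSetoid E) a = P ∧ Quotient.mk (SCCSetoid E) b = Q ∧ E a b

/-- The root `R(G)`: the union of the strongly connected components having no
incoming edge in `G^SCC` (i.e. lying in the source of `G^SCC`). -/
def Root {V : Type*} (E : V → V → Prop) : Set V :=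
  {v | ∀ P, ¬ SCCEdge E P (Quotient.mk (SCCSetoid E) v)}

/-- `f` restricted to `{0,…,n}` is a cycle: a nonempty walk in which only the first and
last vertices are equal. -/
def IsCycle {V : Type*} (E : V → V → Prop) (f : ℕ → V) (n : ℕ) : Prop :=
  0 < n ∧ (∀ i < n, E (f i) (f (i + 1))) ∧ f 0 = f n ∧
    ∀ i j, i < j → j ≤ n → f i = f j → i = 0 ∧ j = n

/-- A digraph is aperiodic if no integer `k > 1` divides the length of every cycle. -/
def IsAperiodic {V : Type*} (E : V → V → Prop) : Prop :=
  ¬ ∃ k : ℕ, 1 < k ∧ ∀ (f : ℕ → V) (n : ℕ), IsCycle E f n → k ∣ n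

/-- A digraph is ergodic if it is nonempty, irreducible and aperiodic. -/
def IsErgodic {V : Type*} (E : V → V → Prop) : Prop :=
  Nonempty V ∧ (∀ v w : V, Reaches E v w) ∧ IsAperiodic E

/-- `M` is a mean on the interval `I ⊆ ℝ` (indexed by the finite index type `ι`):
`min x ≤ M x ≤ max x` for every `x : ι → I`. -/
def IsMeanOn (I : Set ℝ) {ι : Type*} [Fintype ι] (M : (ι → I) → I) : Prop :=
  ∀ (x : ι → I) (h : (Finset.univ : Finset ι).Nonempty),
    Finset.univ.inf' h (fun i => (x i : ℝ)) ≤ (M x : ℝ) ∧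
      (M x : ℝ) ≤ Finset.univ.sup' h (fun i => (x i : ℝ))

/-- `M` is a strict mean on `I`: it is a mean, and `min x < M x < max x`
whenever `x` is nonconstant. -/
def IsStrictMeanOn (I : Set ℝ) {ι : Type*} [Fintype ι] (M : (ι → I) → I) : Prop :=
  IsMeanOn I M ∧ ∀ (x : ι → I) (h : (Finset.univ : Finset ι).Nonempty),
    (∃ i j, x i ≠ x j) →
      Finset.univ.inf' h (fun i => (x i : ℝ)) < (M x : ℝ) ∧
        (M x : ℝ) < Finset.univ.sup' h (fun i => (x i : ℝ))

/-- The mean-type mapping `𝐌_α : Iᵖ → Iᵖ`, whose `i`-th coordinate is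
`Mᵢ(x_{α_{i,1}}, …, x_{α_{i,dᵢ}})`. -/
def MeanTypeMap {I : Set ℝ} {p : ℕ} (d : Fin p → ℕ) (M : ∀ i, (Fin (d i) → I) → I)
    (α : ∀ i, Fin (d i) → Fin p) : (Fin p → I) → (Fin p → I) :=
  fun x i => M i fun j => x (α i j)

/-- The edge relation of the α-incidence graph `G_α` on `{1,…,p}`:
edges are the pairs `(α_{i,j}, i)`. -/
def IncidenceE {p : ℕ} (d : Fin p → ℕ) (α : ∀ i, Fin (d i) → Fin p) :
    Fin p → Fin p → Prop :=
  fun a b => ∃ j : Fin (d b), α b j = a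

def Wk {V : Type*} (E : V → V → Prop) : ℕ → V → V → Prop
  | 0, v, w => v = w
  | n + 1, v, w => ∃ u, Wk E n v u ∧ E u w

theorem Wk.trans {V : Type*} {E : V → V → Prop} {n m : ℕ} {u v w : V}
    (h : Wk E n u v) (h' : Wk E m v w) : Wk E (n + m) u w := by
  induction m generalizing w with
  | zero => cases h'; exact h
  | succ m ih => obtain ⟨z, hz, e⟩ := h'; exact ⟨z, ih hz, e⟩

theorem Wk.reaches {V : Type*} {E : V → V → Prop} {n : ℕ} {u v : V}
    (h : Wk E n u v) : Reaches E u v := by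
  induction n generalizing v with
  | zero => cases h; exact Relation.ReflTransGen.refl
  | succ m ih => obtain ⟨z, hz, e⟩ := h; exact (ih hz).tail e

theorem exists_wk {V : Type*} {E : V → V → Prop} {u v : V}
    (h : Reaches E u v) : ∃ n, Wk E n u v := by
  induction h with
  | refl => exact ⟨0, rfl⟩
  | tail _ e ih => obtain ⟨n, hn⟩ := ih; exact ⟨n + 1, _, hn, e⟩

theorem wk_of_fun {V : Type*} {E : V → V → Prop} (f : ℕ → V) (n : ℕ)
    (h : ∀ i < n, E (f i) (f (i + 1))) : Wk E n (f 0) (f n) := by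
  induction n with
  | zero => rfl
  | succ n ih => exact ⟨f n, ih fun i hi => h i (by omega), h n (by omega)⟩

theorem fun_of_wk {V : Type*} {E : V → V → Prop} {n : ℕ} {u v : V}
    (h : Wk E n u v) : ∃ f : ℕ → V, f 0 = u ∧ f n = v ∧ ∀ i < n, E (f i) (f (i + 1)) := by
  induction n generalizing v with
  | zero => cases h; exact ⟨fun _ => u, rfl, rfl, by simp⟩
  | succ n ih =>
    obtain ⟨z, hz, e⟩ := h
    obtain ⟨f, h0, hn, hf⟩ := ih hz
    refine ⟨fun i => if i ≤ n then f i else v, by simp [h0], by simp, ?_⟩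
    intro i hi
    rcases Nat.lt_or_ge i n with h | h
    · have h1 : i ≤ n := by omega
      have h2 : i + 1 ≤ n := by omega
      simp only [h1, h2, if_true]; exact hf i h
    · have h1 : i = n := by omega
      subst h1
      simpa [hn] using e

theorem closed_dvd {V : Type*} {E : V → V → Prop} {k : ℕ}
    (hk : ∀ (f : ℕ → V) (n : ℕ), IsCycle E f n → k ∣ n) (n : ℕ) :
    ∀ v, Wk E n v v → k ∣ n := by
  induction n using Nat.strong_induction_on with
  | _ n ih =>
  intro v h
  rcases Nat.eq_zero_or_pos n with h0 | h0
  · subst h0; simp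
  obtain ⟨f, f0, fn, hf⟩ := fun_of_wk h
  by_cases hc : IsCycle E f n
  · exact hk f n hc
  · have : ∃ i j, i < j ∧ j ≤ n ∧ f i = f j ∧ ¬ (i = 0 ∧ j = n) := by
      by_contra hcon
      push Not at hcon
      exact hc ⟨h0, hf, f0.trans fn.symm, fun i j a b c => by
        by_contra h'
        exact h' ⟨(hcon i j a b c).1, (hcon i j a b c).2⟩⟩
    obtain ⟨i, j, hij, hj, e, hne⟩ := this
    have w1 : Wk E i (f 0) (f i) := wk_of_fun f i fun a ha => hf a (by omega)
    have w2 : Wk E (j - i) (f i) (f j) := by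
      have := wk_of_fun (E := E) (fun a => f (i + a)) (j - i) fun a ha => hf (i + a) (by omega)
      simpa [Nat.add_sub_cancel' hij.le] using this
    have w3 : Wk E (n - j) (f j) (f n) := by
      have := wk_of_fun (E := E) (fun a => f (j + a)) (n - j) fun a ha => hf (j + a) (by omega)
      simpa [Nat.add_sub_cancel' hj] using this
    rw [← e] at w2 w3
    have d1 := ih (j - i) (by omega) _ w2
    have w4 := w1.trans w3
    rw [f0, fn] at w4
    have d2 := ih (i + (n - j)) (by omega) _ w4
    have := dvd_add d1 d2
    rwa [show j - i + (i + (n - j)) = n by omega] at this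

theorem ergodic_large {V : Type*} {E : V → V → Prop} (hE : IsErgodic E) (r : V) :
    ∃ N, ∀ n ≥ N, Wk E n r r := by
  obtain ⟨-, hr, ha⟩ := hE
  let S : AddSubmonoid ℕ :=
    { carrier := {n | Wk E n r r}
      zero_mem' := rfl
      add_mem' := fun h h' => h.trans h' }
  have key : ∀ (f : ℕ → V) (n : ℕ), IsCycle E f n → Nat.setGcd (S : Set ℕ) ∣ n := by
    intro f n hc
    obtain ⟨a, wa⟩ := exists_wk (hr r (f 0))
    obtain ⟨b, wb⟩ := exists_wk (hr (f 0) r)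
    have wn := wk_of_fun f n hc.2.1
    rw [← hc.2.2.1] at wn
    have h1 : a + b ∈ (S : Set ℕ) := wa.trans wb
    have h2 : (a + n) + b ∈ (S : Set ℕ) := (wa.trans wn).trans wb
    have d1 := Nat.setGcd_dvd_of_mem h1
    have d2 := Nat.setGcd_dvd_of_mem h2
    rw [show a + n + b = (a + b) + n by ring] at d2
    exact (Nat.dvd_add_right d1).mp d2
  have h1 : Nat.setGcd (S : Set ℕ) = 1 := by
    by_contra hne
    apply ha
    rcases Nat.eq_zero_or_pos (Nat.setGcd (S : Set ℕ)) with h0 | h0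
    · refine ⟨2, by norm_num, fun f n hc => ?_⟩
      have := key f n hc
      rw [h0, zero_dvd_iff] at this
      rw [this]; simp
    · exact ⟨_, by omega, key⟩
  obtain ⟨N, hN⟩ := Nat.exists_mem_closure_of_ge (S : Set ℕ)
  refine ⟨N, fun n hn => ?_⟩
  have := hN n hn (by rw [h1]; simp)
  rw [AddSubmonoid.closure_eq] at this
  exact this

theorem root_pred {V : Type*} {E : V → V → Prop} {a b : V} (hb : b ∈ Root E) (e : E a b) :
    a ∈ Root E ∧ Reaches E b a := by
  have h : Quotient.mk (SCCSetoid E) a = Quotient.mk (SCCSetoid E) b := by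
    by_contra hne
    exact hb _ ⟨hne, a, b, rfl, rfl, e⟩
  refine ⟨?_, ?_⟩
  · intro P hP
    rw [h] at hP
    exact hb P hP
  · exact (Quotient.exact h).2

theorem root_reaches {V : Type*} {E : V → V → Prop} {a b : V} (hb : b ∈ Root E)
    (h : Reaches E a b) : a ∈ Root E ∧ Reaches E b a := by
  induction h using Relation.ReflTransGen.head_induction_on with
  | refl => exact ⟨hb, Relation.ReflTransGen.refl⟩
  | head e _ ih =>
    have := root_pred ih.1 e
    exact ⟨this.1, Relation.ReflTransGen.trans ih.2 this.2⟩

theorem root_lift {V : Type*} {E : V → V → Prop} {n : ℕ} {a b : V} (ha : a ∈ Root E)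
    (hb : b ∈ Root E) (h : Wk E n a b) :
    Wk (fun a b : (Root E : Set V) => E a b) n ⟨a, ha⟩ ⟨b, hb⟩ := by
  induction n generalizing b with
  | zero => cases h; rfl
  | succ n ih =>
    obtain ⟨z, hz, e⟩ := h
    exact ⟨⟨z, (root_pred hb e).1⟩, ih _ hz, e⟩

theorem root_unlift {V : Type*} {E : V → V → Prop} {n : ℕ} {a b : (Root E : Set V)}
    (h : Wk (fun a b : (Root E : Set V) => E a b) n a b) : Wk E n a b := by
  induction n generalizing b with
  | zero => cases h; rfl
  | succ n ih =>
    obtain ⟨z, hz, e⟩ := h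
    exact ⟨z, ih hz, e⟩

theorem exists_root {V : Type*} [Finite V] (E : V → V → Prop) (v : V) :
    ∃ r ∈ Root E, Reaches E r v := by
  have key : ∀ (s : Set V) (u : V), s = {a | Reaches E a u} → ∃ r ∈ Root E, Reaches E r u := by
    intro s
    induction s using WellFoundedLT.induction with
    | _ s ih =>
    rintro u rfl
    by_cases hu : u ∈ Root E
    · exact ⟨u, hu, Relation.ReflTransGen.refl⟩
    · simp only [Root, Set.mem_ofPred_eq, not_forall, not_not] at hu
      obtain ⟨P, hne, a, b, rfl, hb, e⟩ := hu
      have hb' : Reaches E b u := (Quotient.exact hb).1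
      have hau : Reaches E a u := Relation.ReflTransGen.head e hb'
      have hua : ¬ Reaches E u a := fun h => hne (Quotient.sound ⟨hau, h⟩)
      obtain ⟨r, hr, hra⟩ := ih {z | Reaches E z a} (by
        refine ⟨fun z hz => Relation.ReflTransGen.trans hz hau, fun h => hua ?_⟩
        exact h (show Reaches E u u from Relation.ReflTransGen.refl)) a rfl
      exact ⟨r, hr, Relation.ReflTransGen.trans hra hau⟩
  exact key _ v rfl

theorem ergodic_scramble {V : Type*} [Fintype V] {E : V → V → Prop}
    (hE : IsErgodic (fun a b : (Root E : Set V) => E a b)) : ∃ r N, ∀ v, Wk E N r v := by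
  obtain ⟨r⟩ := hE.1
  obtain ⟨N, hN⟩ := ergodic_large hE r
  have h1 : ∀ v, ∃ n, Wk E n r v := by
    intro v
    obtain ⟨s, hs, hsv⟩ := exists_root E v
    obtain ⟨n, hn⟩ := exists_wk (hE.2.1 r ⟨s, hs⟩)
    obtain ⟨m, hm⟩ := exists_wk hsv
    exact ⟨n + m, (root_unlift hn).trans hm⟩
  choose l hl using h1
  refine ⟨r, N + ∑ v, l v, fun v => ?_⟩
  have hle : l v ≤ ∑ v, l v := Finset.single_le_sum (f := l) (fun _ _ => Nat.zero_le _) (Finset.mem_univ v)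
  have := (root_unlift (hN (N + ∑ v, l v - l v) (by omega))).trans (hl v)
  rwa [show N + ∑ v, l v - l v + l v = N + ∑ v, l v by omega] at this

theorem nonergodic_sets {V : Type*} [Fintype V] [Nonempty V] {E : V → V → Prop}
    (hpred : ∀ v, ∃ u, E u v)
    (hE : ¬ IsErgodic (fun a b : (Root E : Set V) => E a b)) :
    ∃ S B : ℕ → Set V, (∀ n, (S n).Nonempty) ∧ (∀ n, (B n).Nonempty) ∧ Disjoint (S 0) (B 0) ∧
      (∀ n u v, E u v → v ∈ S (n + 1) → u ∈ S n) ∧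
      (∀ n u v, E u v → v ∈ B (n + 1) → u ∈ B n) := by
  obtain ⟨r, hr, -⟩ := exists_root E (Classical.arbitrary V)
  by_cases hirr : ∀ v w : (Root E : Set V), Reaches (fun a b : (Root E : Set V) => E a b) v w
  · have hper : ¬ IsAperiodic (fun a b : (Root E : Set V) => E a b) :=
      fun h => hE ⟨⟨⟨r, hr⟩⟩, hirr, h⟩
    unfold IsAperiodic at hper
    rw [not_not] at hper
    obtain ⟨k, hk1, hk⟩ := hper
    have hcl := closed_dvd hk
    choose c hc using fun v => exists_wk (hirr ⟨r, hr⟩ v)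
    have hstep : ∀ u v : (Root E : Set V), E u v → c u + 1 ≡ c v [MOD k] := by
      intro u v e
      obtain ⟨l, hl⟩ := exists_wk (hirr v ⟨r, hr⟩)
      have w1 : Wk (fun a b : (Root E : Set V) => E a b) (c u + 1) ⟨r, hr⟩ v := ⟨u, hc u, e⟩
      have d1 := hcl _ _ (w1.trans hl)
      have d2 := hcl _ _ ((hc v).trans hl)
      exact Nat.ModEq.add_right_cancel' l
        (((Nat.modEq_zero_iff_dvd).2 d1).trans ((Nat.modEq_zero_iff_dvd).2 d2).symm)
    have hex : ∀ j, ∃ v, c v + j ≡ c ⟨r, hr⟩ [MOD k] := by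
      intro j
      induction j with
      | zero => exact ⟨⟨r, hr⟩, rfl⟩
      | succ j ih =>
        obtain ⟨v, hv⟩ := ih
        obtain ⟨u, hu⟩ := hpred v
        refine ⟨⟨u, (root_pred v.2 hu).1⟩, ?_⟩
        have := hstep ⟨u, (root_pred v.2 hu).1⟩ v hu
        refine Nat.ModEq.trans ?_ hv
        have := this.add_right j
        rwa [add_assoc, add_comm 1 j] at this
    have hex' : ∀ n, ∃ v, c v ≡ n [MOD k] := by
      intro n
      obtain ⟨v, hv⟩ := hex (c ⟨r, hr⟩ + (k - 1) * n)
      refine ⟨v, Nat.ModEq.add_right_cancel' (c ⟨r, hr⟩ + (k - 1) * n) (hv.trans ?_)⟩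
      obtain ⟨m, rfl⟩ : ∃ m, k = m + 1 := ⟨k - 1, by omega⟩
      have : n + (c ⟨r, hr⟩ + (m + 1 - 1) * n) = c ⟨r, hr⟩ + (m + 1) * n := by
        simp; ring
      rw [this]
      simp [Nat.ModEq]
    refine ⟨fun n => {v | ∃ h : v ∈ Root E, c ⟨v, h⟩ ≡ n [MOD k]},
      fun n => {v | ∃ h : v ∈ Root E, ¬ c ⟨v, h⟩ ≡ n [MOD k]}, ?_, ?_, ?_, ?_, ?_⟩
    · intro n
      obtain ⟨v, hv⟩ := hex' n
      exact ⟨v, v.2, hv⟩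
    · intro n
      obtain ⟨v, hv⟩ := hex' (n + 1)
      refine ⟨v, v.2, fun h => ?_⟩
      have h1 : n + 0 ≡ n + 1 [MOD k] := h.symm.trans hv
      have h2 := Nat.ModEq.add_left_cancel' n h1
      have := (Nat.modEq_zero_iff_dvd).1 h2.symm
      have := Nat.le_of_dvd one_pos this
      omega
    · rw [Set.disjoint_left]
      rintro v ⟨h, h1⟩ ⟨_, h2⟩
      exact h2 h1
    · rintro n u v e ⟨h, h1⟩
      refine ⟨(root_pred h e).1, ?_⟩
      exact Nat.ModEq.add_right_cancel' 1 ((hstep ⟨u, (root_pred h e).1⟩ ⟨v, h⟩ e).trans h1)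
    · rintro n u v e ⟨h, h1⟩
      refine ⟨(root_pred h e).1, fun h2 => h1 ?_⟩
      exact (hstep ⟨u, (root_pred h e).1⟩ ⟨v, h⟩ e).symm.trans (h2.add_right 1)
  · push Not at hirr
    obtain ⟨v, w, hvw⟩ := hirr
    refine ⟨fun _ => {u | Reaches E u v}, fun _ => {u | Reaches E u w}, ?_, ?_, ?_, ?_, ?_⟩
    · exact fun _ => ⟨v, Relation.ReflTransGen.refl⟩
    · exact fun _ => ⟨w, Relation.ReflTransGen.refl⟩
    · rw [Set.disjoint_left]
      intro u h1 h2
      obtain ⟨n, hn⟩ := exists_wk (Relation.ReflTransGen.trans (root_reaches v.2 h1).2 h2)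
      exact hvw (root_lift v.2 w.2 hn).reaches
    · exact fun n a b e h => Relation.ReflTransGen.head e h
    · exact fun n a b e h => Relation.ReflTransGen.head e h

noncomputable def vmx {I : Set ℝ} {V : Type*} [Fintype V] [Nonempty V] (x : V → I) : ℝ :=
  Finset.univ.sup' Finset.univ_nonempty (fun i => (x i : ℝ))

noncomputable def vmn {I : Set ℝ} {V : Type*} [Fintype V] [Nonempty V] (x : V → I) : ℝ :=
  Finset.univ.inf' Finset.univ_nonempty (fun i => (x i : ℝ))

section
variable {I : Set ℝ} {V : Type*} [Fintype V] [Nonempty V]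

theorem le_vmx (x : V → I) (i : V) : (x i : ℝ) ≤ vmx x :=
  Finset.le_sup' (fun i => (x i : ℝ)) (Finset.mem_univ i)

theorem vmn_le (x : V → I) (i : V) : vmn x ≤ (x i : ℝ) :=
  Finset.inf'_le (fun i => (x i : ℝ)) (Finset.mem_univ i)

theorem vmx_le {x : V → I} {c : ℝ} (h : ∀ i, (x i : ℝ) ≤ c) : vmx x ≤ c :=
  Finset.sup'_le _ _ fun i _ => h i

theorem le_vmn {x : V → I} {c : ℝ} (h : ∀ i, c ≤ (x i : ℝ)) : c ≤ vmn x :=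
  Finset.le_inf' _ _ fun i _ => h i

theorem vmx_lt {x : V → I} {c : ℝ} (h : ∀ i, (x i : ℝ) < c) : vmx x < c :=
  (Finset.sup'_lt_iff _).2 fun i _ => h i

theorem lt_vmn {x : V → I} {c : ℝ} (h : ∀ i, c < (x i : ℝ)) : c < vmn x :=
  (Finset.lt_inf'_iff _).2 fun i _ => h i

theorem vmx_mem (x : V → I) : vmx x ∈ I := by
  obtain ⟨i, -, hi⟩ := Finset.exists_mem_eq_sup' Finset.univ_nonempty (fun i => (x i : ℝ))
  unfold vmx; rw [hi]; exact (x i).2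

theorem vmn_mem (x : V → I) : vmn x ∈ I := by
  obtain ⟨i, -, hi⟩ := Finset.exists_mem_eq_inf' Finset.univ_nonempty (fun i => (x i : ℝ))
  unfold vmn; rw [hi]; exact (x i).2

theorem vmn_le_vmx (x : V → I) : vmn x ≤ vmx x :=
  (vmn_le x (Classical.arbitrary V)).trans (le_vmx x _)

theorem cont_vmx : Continuous (vmx : (V → I) → ℝ) := by
  unfold vmx
  exact Continuous.finset_sup'_apply _ fun i _ => continuous_subtype_val.comp (continuous_apply i)

theorem cont_vmn : Continuous (vmn : (V → I) → ℝ) := by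
  unfold vmn
  exact Continuous.finset_inf'_apply _ fun i _ => continuous_subtype_val.comp (continuous_apply i)

structure Good (E : V → V → Prop) (T : (V → I) → (V → I)) : Prop where
  hle : ∀ x i (c : ℝ), (∀ a, E a i → (x a : ℝ) ≤ c) → (T x i : ℝ) ≤ c
  hge : ∀ x i (c : ℝ), (∀ a, E a i → c ≤ (x a : ℝ)) → c ≤ (T x i : ℝ)
  hlt : ∀ x i (c : ℝ), (∀ a, E a i → (x a : ℝ) ≤ c) → (∃ a, E a i ∧ (x a : ℝ) < c) →
    (T x i : ℝ) < c
  hgt : ∀ x i (c : ℝ), (∀ a, E a i → c ≤ (x a : ℝ)) → (∃ a, E a i ∧ c < (x a : ℝ)) →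
    c < (T x i : ℝ)

variable {E : V → V → Prop} {T : (V → I) → (V → I)}

theorem Good.mxanti (h : Good E T) (x : V → I) : Antitone fun n => vmx (T^[n] x) := by
  refine antitone_nat_of_succ_le fun n => ?_
  rw [Function.iterate_succ_apply']
  exact vmx_le fun i => h.hle _ _ _ fun a _ => le_vmx _ a

theorem Good.mnmono (h : Good E T) (x : V → I) : Monotone fun n => vmn (T^[n] x) := by
  refine monotone_nat_of_le_succ fun n => ?_
  rw [Function.iterate_succ_apply']
  exact le_vmn fun i => h.hge _ _ _ fun a _ => vmn_le _ a

theorem Good.iter_lt (h : Good E T) (x : V → I) {n : ℕ} {r v : V} (w : Wk E n r v)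
    (hr : (x r : ℝ) < vmx x) : (T^[n] x v : ℝ) < vmx x := by
  induction n generalizing v with
  | zero => cases w; exact hr
  | succ n ih =>
    obtain ⟨z, hz, e⟩ := w
    rw [Function.iterate_succ_apply']
    exact h.hlt _ _ _ (fun a _ => (le_vmx _ a).trans (h.mxanti x (Nat.zero_le n))) ⟨z, e, ih hz⟩

theorem Good.iter_gt (h : Good E T) (x : V → I) {n : ℕ} {r v : V} (w : Wk E n r v)
    (hr : vmn x < (x r : ℝ)) : vmn x < (T^[n] x v : ℝ) := by
  induction n generalizing v with
  | zero => cases w; exact hr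
  | succ n ih =>
    obtain ⟨z, hz, e⟩ := w
    rw [Function.iterate_succ_apply']
    refine h.hgt _ _ _ (fun a _ => ?_) ⟨z, e, ih hz⟩
    exact (h.mnmono x (Nat.zero_le n)).trans (vmn_le _ a)

theorem Good.osc_lt (h : Good E T) {r : V} {N : ℕ} (w : ∀ v, Wk E N r v) (x : V → I)
    (hx : vmn x < vmx x) : vmx (T^[N] x) - vmn (T^[N] x) < vmx x - vmn x := by
  have h1 : vmx (T^[N] x) ≤ vmx x := h.mxanti x (Nat.zero_le N)
  have h2 : vmn x ≤ vmn (T^[N] x) := h.mnmono x (Nat.zero_le N)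
  by_cases hr : (x r : ℝ) < vmx x
  · have := vmx_lt fun v => h.iter_lt x (w v) hr
    linarith
  · have := lt_vmn fun v => h.iter_gt x (w v) (by linarith : vmn x < (x r : ℝ))
    linarith

open Filter Topology

theorem Good.tendsto_mn (h : Good E T) (x : V → I) :
    Tendsto (fun n => vmn (T^[n] x)) atTop (𝓝 (⨆ n, vmn (T^[n] x))) := by
  refine tendsto_atTop_ciSup (h.mnmono x) ⟨vmx x, ?_⟩
  rintro _ ⟨n, rfl⟩
  exact (vmn_le_vmx _).trans (h.mxanti x (Nat.zero_le n))

theorem Good.tendsto_mx (h : Good E T) (x : V → I) :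
    Tendsto (fun n => vmx (T^[n] x)) atTop (𝓝 (⨅ n, vmx (T^[n] x))) := by
  refine tendsto_atTop_ciInf (h.mxanti x) ⟨vmn x, ?_⟩
  rintro _ ⟨n, rfl⟩
  exact (h.mnmono x (Nat.zero_le n)).trans (vmn_le_vmx _)

theorem compact_box (hI : I.OrdConnected) (x : V → I) :
    IsCompact {y : V → I | ∀ i, vmn x ≤ (y i : ℝ) ∧ (y i : ℝ) ≤ vmx x} := by
  have hc : IsCompact {y : I | vmn x ≤ (y : ℝ) ∧ (y : ℝ) ≤ vmx x} := by
    rw [Subtype.isCompact_iff]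
    convert isCompact_Icc (a := vmn x) (b := vmx x) using 1
    ext z
    constructor
    · rintro ⟨y, hy, rfl⟩; exact hy
    · intro hz
      exact ⟨⟨z, hI.out (vmn_mem x) (vmx_mem x) hz⟩, hz, rfl⟩
  convert isCompact_univ_pi (fun _ : V => hc) using 1
  ext y; simp

theorem Good.lim_eq (h : Good E T) (hI : I.OrdConnected) (hT : Continuous T) {r : V} {N : ℕ}
    (w : ∀ v, Wk E N r v) (x : V → I) :
    (⨆ n, vmn (T^[n] x)) = ⨅ n, vmx (T^[n] x) := by
  obtain ⟨y, -, φ, hφ, hy⟩ := (compact_box hI x).tendsto_subseq (x := fun n => T^[n] x)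
    (fun n i => ⟨(h.mnmono x (Nat.zero_le n)).trans (vmn_le _ i),
      (le_vmx _ i).trans (h.mxanti x (Nat.zero_le n))⟩)
  have hTN : Continuous (T^[N]) := hT.iterate N
  have hy2 : Tendsto (fun n => T^[N + φ n] x) atTop (𝓝 (T^[N] y)) := by
    have := (hTN.tendsto y).comp hy
    refine this.congr fun n => ?_
    simp [Function.iterate_add_apply]
  have hφ1 := hφ.tendsto_atTop
  have hφ2 : Tendsto (fun n => N + φ n) atTop atTop := 
    tendsto_atTop_mono (fun n => Nat.le_add_left _ _) hφ1
  have a1 := tendsto_nhds_unique ((h.tendsto_mn x).comp hφ1) ((cont_vmn.tendsto y).comp hy)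
  have a2 := tendsto_nhds_unique ((h.tendsto_mx x).comp hφ1) ((cont_vmx.tendsto y).comp hy)
  have a3 := tendsto_nhds_unique ((h.tendsto_mn x).comp hφ2) ((cont_vmn.tendsto _).comp hy2)
  have a4 := tendsto_nhds_unique ((h.tendsto_mx x).comp hφ2) ((cont_vmx.tendsto _).comp hy2)
  by_contra hne
  have hlt : vmn y < vmx y := by
    refine lt_of_le_of_ne (vmn_le_vmx y) ?_
    rw [← a1, ← a2]; exact hne
  have := h.osc_lt w y hlt
  rw [← a1, ← a2, ← a3, ← a4] at this
  exact lt_irrefl _ this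

theorem Good.exists_mn (h : Good E T) (hI : I.OrdConnected) :
    ∃ K : (V → I) → I, IsMeanOn I K ∧ (∀ x, K (T x) = K x) ∧
      ∀ x, (K x : ℝ) = ⨆ n, vmn (T^[n] x) := by
  have hb : ∀ x : V → I, vmn x ≤ (⨆ n, vmn (T^[n] x)) ∧ (⨆ n, vmn (T^[n] x)) ≤ vmx x := fun x =>
    ⟨ge_of_tendsto' (h.tendsto_mn x) fun n => h.mnmono x (Nat.zero_le n),
      le_of_tendsto' (h.tendsto_mn x) fun n =>
        (vmn_le_vmx _).trans (h.mxanti x (Nat.zero_le n))⟩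
  refine ⟨fun x => ⟨⨆ n, vmn (T^[n] x), hI.out (vmn_mem x) (vmx_mem x) (hb x)⟩,
    fun x _ => hb x, fun x => Subtype.ext ?_, fun x => rfl⟩
  have h1 := (h.tendsto_mn x).comp (tendsto_add_atTop_nat 1)
  have h2 := h.tendsto_mn (T x)
  simp only [← Function.iterate_succ_apply] at h2
  simp only [← Function.iterate_succ_apply]
  exact tendsto_nhds_unique h2 h1

theorem Good.exists_mx (h : Good E T) (hI : I.OrdConnected) :
    ∃ K : (V → I) → I, IsMeanOn I K ∧ (∀ x, K (T x) = K x) ∧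
      ∀ x, (K x : ℝ) = ⨅ n, vmx (T^[n] x) := by
  have hb : ∀ x : V → I, vmn x ≤ (⨅ n, vmx (T^[n] x)) ∧ (⨅ n, vmx (T^[n] x)) ≤ vmx x := fun x =>
    ⟨ge_of_tendsto' (h.tendsto_mx x) fun n =>
        (h.mnmono x (Nat.zero_le n)).trans (vmn_le_vmx _),
      le_of_tendsto' (h.tendsto_mx x) fun n => h.mxanti x (Nat.zero_le n)⟩
  refine ⟨fun x => ⟨⨅ n, vmx (T^[n] x), hI.out (vmn_mem x) (vmx_mem x) (hb x)⟩,
    fun x _ => hb x, fun x => Subtype.ext ?_, fun x => rfl⟩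
  have h1 := (h.tendsto_mx x).comp (tendsto_add_atTop_nat 1)
  have h2 := h.tendsto_mx (T x)
  simp only [← Function.iterate_succ_apply] at h2
  simp only [← Function.iterate_succ_apply]
  exact tendsto_nhds_unique h2 h1

theorem Good.unique (h : Good E T) (hI : I.OrdConnected) (hT : Continuous T) {r : V} {N : ℕ}
    (w : ∀ v, Wk E N r v) :
    ∃ K : (V → I) → I, IsMeanOn I K ∧ (∀ x, K (T x) = K x) ∧
      ∀ L : (V → I) → I, IsMeanOn I L → (∀ x, L (T x) = L x) → L = K := by
  obtain ⟨K, hK, hKi, hKe⟩ := h.exists_mn hI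
  refine ⟨K, hK, hKi, fun L hL hLi => funext fun x => Subtype.ext ?_⟩
  have hit : ∀ n, L (T^[n] x) = L x := by
    intro n
    induction n with
    | zero => rfl
    | succ n ih => rw [Function.iterate_succ_apply', hLi, ih]
  have hm : ∀ n, vmn (T^[n] x) ≤ (L x : ℝ) ∧ (L x : ℝ) ≤ vmx (T^[n] x) := by
    intro n
    rw [← hit n]
    exact hL _ Finset.univ_nonempty
  rw [hKe]
  apply le_antisymm
  · rw [h.lim_eq hI hT w]
    exact ge_of_tendsto' (h.tendsto_mx x) fun n => (hm n).2
  · exact le_of_tendsto' (h.tendsto_mn x) fun n => (hm n).1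

theorem Good.not_unique (h : Good E T) (hI : I.OrdConnected) {a b : ℝ} (ha : a ∈ I) (hb : b ∈ I)
    (hab : a < b) (S B : ℕ → Set V) (hS : ∀ n, (S n).Nonempty) (hB : ∀ n, (B n).Nonempty)
    (hd : Disjoint (S 0) (B 0))
    (hS2 : ∀ n u v, E u v → v ∈ S (n + 1) → u ∈ S n)
    (hB2 : ∀ n u v, E u v → v ∈ B (n + 1) → u ∈ B n) :
    ∃ K L : (V → I) → I, IsMeanOn I K ∧ (∀ x, K (T x) = K x) ∧
      IsMeanOn I L ∧ (∀ x, L (T x) = L x) ∧ K ≠ L := by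
  classical
  obtain ⟨K, hK, hKi, hKe⟩ := h.exists_mn hI
  obtain ⟨L, hL, hLi, hLe⟩ := h.exists_mx hI
  refine ⟨K, L, hK, hKi, hL, hLi, fun heq => ?_⟩
  let x : V → I := fun v => if v ∈ S 0 then ⟨b, hb⟩ else ⟨a, ha⟩
  have hSn : ∀ n, ∀ v ∈ S n, b ≤ (T^[n] x v : ℝ) := by
    intro n
    induction n with
    | zero => intro v hv; simp [x, hv]
    | succ n ih =>
      intro v hv
      rw [Function.iterate_succ_apply']
      exact h.hge _ _ _ fun u hu => ih u (hS2 n u v hu hv)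
  have hBn : ∀ n, ∀ v ∈ B n, (T^[n] x v : ℝ) ≤ a := by
    intro n
    induction n with
    | zero =>
      intro v hv
      have : v ∉ S 0 := fun h' => Set.disjoint_left.1 hd h' hv
      simp [x, this]
    | succ n ih =>
      intro v hv
      rw [Function.iterate_succ_apply']
      exact h.hle _ _ _ fun u hu => ih u (hB2 n u v hu hv)
  have h1 : (K x : ℝ) ≤ a := by
    rw [hKe]
    refine le_of_tendsto' (h.tendsto_mn x) fun n => ?_
    obtain ⟨v, hv⟩ := hB n
    exact (vmn_le _ v).trans (hBn n v hv)
  have h2 : b ≤ (L x : ℝ) := by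
    rw [hLe]
    refine ge_of_tendsto' (h.tendsto_mx x) fun n => ?_
    obtain ⟨v, hv⟩ := hS n
    exact (hSn n v hv).trans (le_vmx _ v)
  rw [heq] at h1
  linarith

end

theorem good_meanType {I : Set ℝ} {p : ℕ} [Nonempty (Fin p)]
    (d : Fin p → ℕ) (hd : ∀ i, 0 < d i)
    (M : ∀ i, (Fin (d i) → I) → I)
    (hstrict : ∀ i, IsStrictMeanOn I (M i))
    (α : ∀ i, Fin (d i) → Fin p) :
    Good (IncidenceE d α) (MeanTypeMap d M α) := by
  have hne : ∀ i, (Finset.univ : Finset (Fin (d i))).Nonempty := fun i => ⟨⟨0, hd i⟩, by simp⟩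
  have hle : ∀ x i (c : ℝ), (∀ a, IncidenceE d α a i → ((x a : I) : ℝ) ≤ c) →
      (MeanTypeMap d M α x i : ℝ) ≤ c := fun x i c hc =>
    ((hstrict i).1 _ (hne i)).2.trans (Finset.sup'_le _ _ fun j _ => hc _ ⟨j, rfl⟩)
  have hge : ∀ x i (c : ℝ), (∀ a, IncidenceE d α a i → c ≤ ((x a : I) : ℝ)) →
      c ≤ (MeanTypeMap d M α x i : ℝ) := fun x i c hc =>
    le_trans (Finset.le_inf' _ _ fun j _ => hc _ ⟨j, rfl⟩) ((hstrict i).1 _ (hne i)).1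
  refine ⟨hle, hge, ?_, ?_⟩
  · rintro x i c hc ⟨_, ⟨j, rfl⟩, hj⟩
    by_cases hcon : ∃ k l, x (α i k) ≠ x (α i l)
    · exact ((hstrict i).2 (fun j => x (α i j)) (hne i) hcon).2.trans_le
        (Finset.sup'_le _ _ fun j _ => hc _ ⟨j, rfl⟩)
    · push Not at hcon
      refine lt_of_le_of_lt (hle x i (x (α i j)) ?_) hj
      rintro _ ⟨k, rfl⟩
      rw [hcon k j]
  · rintro x i c hc ⟨_, ⟨j, rfl⟩, hj⟩
    by_cases hcon : ∃ k l, x (α i k) ≠ x (α i l)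
    · exact lt_of_le_of_lt (Finset.le_inf' _ _ fun j _ => hc _ ⟨j, rfl⟩)
        ((hstrict i).2 (fun j => x (α i j)) (hne i) hcon).1
    · push Not at hcon
      refine lt_of_lt_of_le hj (hge x i (x (α i j)) ?_)
      rintro _ ⟨k, rfl⟩
      rw [hcon k j]

/-- Let `I` be an interval with more than one point and `𝐌 = (M₁,…,M_p)` a `d`-averaging
mapping on `I` with all `Mᵢ` continuous and strict. Then there exists a unique
`𝐌_α`-invariant mean if and only if the root graph `𝓡(G_α)` is ergodic. -/
theorem stmt_15 {I : Set ℝ} (hI : I.OrdConnected)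
    (hI2 : ∃ a b : ℝ, a ∈ I ∧ b ∈ I ∧ a ≠ b) {p : ℕ} (hp : 0 < p)
    (d : Fin p → ℕ) (hd : ∀ i, 0 < d i)
    (M : ∀ i, (Fin (d i) → I) → I)
    (hstrict : ∀ i, IsStrictMeanOn I (M i)) (hcont : ∀ i, Continuous (M i))
    (α : ∀ i, Fin (d i) → Fin p) :
    (∃ K : (Fin p → I) → I, IsMeanOn I K ∧ (∀ x, K (MeanTypeMap d M α x) = K x) ∧
        ∀ L : (Fin p → I) → I, IsMeanOn I L → (∀ x, L (MeanTypeMap d M α x) = L x) → L = K) ↔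
      IsErgodic (fun a b : (Root (IncidenceE d α) : Set (Fin p)) => IncidenceE d α a b) := by
  have : Nonempty (Fin p) := ⟨⟨0, hp⟩⟩
  have hG := good_meanType d hd M hstrict α
  have hT : Continuous (MeanTypeMap d M α) :=
    continuous_pi fun i => (hcont i).comp (continuous_pi fun j => continuous_apply (α i j))
  constructor
  · rintro ⟨K, -, -, hu⟩
    by_contra hE
    obtain ⟨S, B, h1, h2, h3, h4, h5⟩ :=
      nonergodic_sets (fun v => ⟨α v ⟨0, hd v⟩, ⟨0, hd v⟩, rfl⟩) hE
    obtain ⟨a, b, ha, hb, hab⟩ : ∃ a b : ℝ, a ∈ I ∧ b ∈ I ∧ a < b := by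
      obtain ⟨a, b, ha, hb, hab⟩ := hI2
      rcases lt_or_gt_of_ne hab with h | h
      · exact ⟨a, b, ha, hb, h⟩
      · exact ⟨b, a, hb, ha, h⟩
    obtain ⟨K', L', k1, k2, l1, l2, hne⟩ := hG.not_unique hI ha hb hab S B h1 h2 h3 h4 h5
    exact hne ((hu K' k1 k2).trans (hu L' l1 l2).symm)
  · intro hE
    obtain ⟨r, N, w⟩ := ergodic_scramble hE
    exact hG.unique hI hT w
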